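/- The group SL_*(2,A_m) has the Bruhat presentation: it is generated by h(t) (t ∈ A_m^×), u(b) (b ∈ A_m^s) and w, and for every group K, every pair of maps H : A_m^× → K, U : A_m^s → K and every element W_0 ∈ K satisfying (1) H(t_1)H(t_2) = H(t_1 t_2), (2) U(b_1)U(b_2) = U(b_1 + b_2), (3) H(t)U(b) = U(t b t*) H(t), (4) W_0² = H(−1), (5) W_0 H(t) = H((t*)^{-1}) W_0 for all t, t_1, t_2 ∈ A_m^×, b, b_1, b_2 ∈ A_m^s, and (6) U(t) W_0 U(t^{-1}) W_0 U(t) = W_0 H(−t^{-1}) for all t ∈ A_m^× ∩ A_m^s, there exists a unique group homomorphism φ : SL_*(2,A_m) → K with φ(h(t)) = H(t), φ(u(b)) = U(b) and φ(w) = W_0. -/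

import Mathlib

open Polynomial

set_option synthInstance.maxHeartbeats 1000000

/-- The truncated polynomial algebra `A_m = k[x]/⟨x^m⟩`. -/
abbrev TruncPoly (k : Type*) [Field k] (m : ℕ) :=
  Polynomial k ⧸ Ideal.span {(Polynomial.X : Polynomial k) ^ m}

/-- The class of `x` in `A_m = k[x]/⟨x^m⟩`. -/
noncomputable def xbar (k : Type*) [Field k] (m : ℕ) : TruncPoly k m :=
  Ideal.Quotient.mk _ (Polynomial.X : Polynomial k)

/-- The set `SL_*(2,A)` for a commutative ring `A` equipped with an involution `σ`. -/
def SLstarSet {A : Type*} [CommRing A] (σ : A → A) : Set (Matrix (Fin 2) (Fin 2) A) :=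
  {g | g 0 0 * σ (g 0 1) = g 0 1 * σ (g 0 0) ∧
       g 1 0 * σ (g 1 1) = g 1 1 * σ (g 1 0) ∧
       σ (g 0 0) * g 1 0 = σ (g 1 0) * g 0 0 ∧
       σ (g 0 1) * g 1 1 = σ (g 1 1) * g 0 1 ∧
       g 0 0 * σ (g 1 1) - g 0 1 * σ (g 1 0) = 1 ∧
       σ (g 0 0) * g 1 1 - σ (g 1 0) * g 0 1 = 1}

/-- The Bruhat generator `h(t) = [[t, 0],[0, (t*)⁻¹]]`. -/
def hM {A : Type*} [CommRing A] (σ : A →* A) (t : Aˣ) : Matrix (Fin 2) (Fin 2) A :=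
  !![(t : A), 0; 0, ((Units.map σ t)⁻¹ : Aˣ)]

/-- The Bruhat generator `u(s) = [[1, s],[0, 1]]`. -/
def uM {A : Type*} [CommRing A] (s : A) : Matrix (Fin 2) (Fin 2) A :=
  !![1, s; 0, 1]

/-- The Bruhat generator `w = [[0, 1],[−1, 0]]`. -/
def wM (A : Type*) [CommRing A] : Matrix (Fin 2) (Fin 2) A :=
  !![0, 1; -1, 0]

section General

variable {k A : Type*} [CommRing k] [CommRing A] [Algebra k A]

theorem slstar_mul (σ : A →ₐ[k] A) (hσ : ∀ a, σ (σ a) = a) :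
    ∀ g ∈ SLstarSet (⇑σ), ∀ g' ∈ SLstarSet (⇑σ), g * g' ∈ SLstarSet (⇑σ) := by
  rintro g ⟨h1, h2, h3, h4, h5, h6⟩ g' ⟨k1, k2, k3, k4, k5, k6⟩
  have k5s := congrArg σ k5
  have k6s := congrArg σ k6
  have h5s := congrArg σ h5
  have h6s := congrArg σ h6
  simp only [map_sub, map_mul, hσ, map_one] at k5s k6s h5s h6s
  simp only [SLstarSet, Set.mem_setOf_eq, Matrix.mul_apply, Fin.sum_univ_two, map_add, map_mul]
  generalize σ (g 0 0) = sa at *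
  generalize σ (g 0 1) = sb at *
  generalize σ (g 1 0) = sc at *
  generalize σ (g 1 1) = sd at *
  generalize σ (g' 0 0) = sa' at *
  generalize σ (g' 0 1) = sb' at *
  generalize σ (g' 1 0) = sc' at *
  generalize σ (g' 1 1) = sd' at *
  generalize g 0 0 = a at *
  generalize g 0 1 = b at *
  generalize g 1 0 = c at *
  generalize g 1 1 = d at *
  generalize g' 0 0 = a' at *
  generalize g' 0 1 = b' at *
  generalize g' 1 0 = c' at *
  generalize g' 1 1 = d' at *
  refine ⟨?_, ?_, ?_, ?_, ?_, ?_⟩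
  · linear_combination a * sa * k1 + a * sb * k5 - b * sa * k5s + b * sb * k2 + h1
  · linear_combination c * sc * k1 + c * sd * k5 - d * sc * k5s + d * sd * k2 + h2
  · linear_combination sa' * a' * h3 + sa' * c' * h6 - sc' * a' * h6s + sc' * c' * h4 + k3
  · linear_combination sb' * b' * h3 + sb' * d' * h6 - sd' * b' * h6s + sd' * d' * h4 + k4
  · linear_combination a * sc * k1 + a * sd * k5 - b * sc * k5s + b * sd * k2 + h5
  · linear_combination sa' * b' * h3 + sa' * d' * h6 - sc' * b' * h6s + sc' * d' * h4 + k6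

theorem slstar_h (σ : A →ₐ[k] A) (hσ : ∀ a, σ (σ a) = a) (t : Aˣ) :
    hM (σ : A →* A) t ∈ SLstarSet (⇑σ) := by
  have e1 : σ (t : A) * ((Units.map (σ : A →* A) t)⁻¹ : Aˣ) = 1 :=
    Units.mul_inv (Units.map (σ : A →* A) t)
  have e2 := congrArg σ e1
  simp only [map_mul, hσ, map_one] at e2
  refine ⟨?_, ?_, ?_, ?_, ?_, ?_⟩ <;> simp [hM]
  · simpa using e2
  · simpa using e1

theorem slstar_u (σ : A →ₐ[k] A) (s : A) (hs : σ s = s) : uM s ∈ SLstarSet (⇑σ) := by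
  refine ⟨?_, ?_, ?_, ?_, ?_, ?_⟩ <;> simp [uM, hs]

theorem slstar_w (σ : A →ₐ[k] A) : wM A ∈ SLstarSet (⇑σ) := by
  refine ⟨?_, ?_, ?_, ?_, ?_, ?_⟩ <;> simp [wM]

theorem wM_mul (g : Matrix (Fin 2) (Fin 2) A) :
    wM A * g = !![g 1 0, g 1 1; -g 0 0, -g 0 1] := by
  unfold wM
  ext i j
  fin_cases i <;> fin_cases j <;> simp [Matrix.mul_apply, Fin.sum_univ_two]

theorem uM_mul (s : A) (g : Matrix (Fin 2) (Fin 2) A) :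
    uM s * g = !![g 0 0 + s * g 1 0, g 0 1 + s * g 1 1; g 1 0, g 1 1] := by
  unfold uM
  ext i j
  fin_cases i <;> fin_cases j <;> simp [Matrix.mul_apply, Fin.sum_univ_two]

theorem hM_mul (σ : A →* A) (t : Aˣ) (g : Matrix (Fin 2) (Fin 2) A) :
    hM σ t * g = !![t * g 0 0, t * g 0 1; ((Units.map σ t)⁻¹ : Aˣ) * g 1 0,
      ((Units.map σ t)⁻¹ : Aˣ) * g 1 1] := by
  unfold hM
  ext i j
  fin_cases i <;> fin_cases j <;> simp [Matrix.mul_apply, Fin.sum_univ_two]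

/-- normal form matrix -/
def NM (σ : A →* A) (x : A) (t : Aˣ) (y : A) : Matrix (Fin 2) (Fin 2) A :=
  uM x * hM σ t * wM A * uM y

theorem NM_eq (σ : A →* A) (x : A) (t : Aˣ) (y : A) :
    NM σ x t y = !![-(x * ((Units.map σ t)⁻¹ : Aˣ)), t - x * ((Units.map σ t)⁻¹ : Aˣ) * y;
      -(((Units.map σ t)⁻¹ : Aˣ) : A), -(((Units.map σ t)⁻¹ : Aˣ) : A) * y] := by
  simp only [NM, uM, hM, wM]
  ext i j
  fin_cases i <;> fin_cases j <;> simp [Matrix.mul_apply, Fin.sum_univ_two] <;> ring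

theorem NM_inj (σ : A →ₐ[k] A) (hσ : ∀ a, σ (σ a) = a) {x x' y y' : A} {t t' : Aˣ}
    (h : NM (σ : A →* A) x t y = NM (σ : A →* A) x' t' y') : x = x' ∧ t = t' ∧ y = y' := by
  rw [NM_eq, NM_eq] at h
  have h00 := congrFun (congrFun h 0) 0
  have h10 := congrFun (congrFun h 1) 0
  have h11 := congrFun (congrFun h 1) 1
  simp only [Matrix.of_apply, Matrix.cons_val', Matrix.cons_val_zero, Matrix.cons_val_one,
    Matrix.cons_val_fin_one, neg_inj, neg_mul] at h00 h10 h11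
  have h1 : Units.map (σ : A →* A) t = Units.map (σ : A →* A) t' :=
    inv_injective (Units.ext h10)
  have ht : t = t' := by
    have h2 : σ (t : A) = σ (t' : A) := congrArg (fun z : Aˣ => (z : A)) h1
    have h3 := congrArg σ h2
    rw [hσ, hσ] at h3
    exact Units.ext h3
  subst ht
  exact ⟨Units.mul_left_inj _ |>.1 h00, rfl, Units.mul_right_inj _ |>.1 h11⟩

theorem NM_exists (σ : A →ₐ[k] A) (hσ : ∀ a, σ (σ a) = a) (g : Matrix (Fin 2) (Fin 2) A)
    (hg : g ∈ SLstarSet (⇑σ)) (hc : IsUnit (g 1 0)) :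
    ∃ (x : A) (t : Aˣ) (y : A), σ x = x ∧ σ y = y ∧ g = NM (σ : A →* A) x t y := by
  obtain ⟨h1, h2, h3, h4, h5, h6⟩ := hg
  obtain ⟨c, hc⟩ := hc
  rw [← hc] at h2 h3 h5 h6
  have e0 : (c : A) * (c⁻¹ : Aˣ) = 1 := Units.mul_inv c
  have e1 := congrArg σ e0
  simp only [map_mul, map_one] at e1
  refine ⟨g 0 0 * (c⁻¹ : Aˣ), -(Units.map (σ : A →* A) c)⁻¹, (c⁻¹ : Aˣ) * g 1 1, ?_, ?_, ?_⟩
  · rw [map_mul]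
    linear_combination σ (c⁻¹ : Aˣ) * (c⁻¹ : Aˣ) * h3 + g 0 0 * (c⁻¹ : Aˣ) * e1
       - σ (g 0 0) * σ (c⁻¹ : Aˣ) * e0
  · rw [map_mul]
    linear_combination σ (c⁻¹ : Aˣ) * (c⁻¹ : Aˣ) * h2 + g 1 1 * (c⁻¹ : Aˣ) * e1
       - σ (g 1 1) * σ (c⁻¹ : Aˣ) * e0
  · have e2 : (Units.map (σ : A →* A) (-(Units.map (σ : A →* A) c)⁻¹))⁻¹ = -c := by
      rw [inv_eq_iff_eq_inv]
      apply Units.ext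
      have e3 : σ (((Units.map (σ : A →* A) c)⁻¹ : Aˣ) : A) = (c⁻¹ : Aˣ) := by
        have := hσ (c⁻¹ : Aˣ)
        rw [← map_inv]; exact this
      have e5 : σ (-(((Units.map (σ : A →* A) c)⁻¹ : Aˣ) : A)) = -((c⁻¹ : Aˣ) : A) := by
        rw [map_neg, e3]
      rw [inv_neg]
      exact e5
    have e4 : (((Units.map (σ : A →* A) c)⁻¹ : Aˣ) : A) = σ (c⁻¹ : Aˣ) := by
      rw [← map_inv]; rfl
    rw [NM_eq, e2]
    ext i j
    fin_cases i <;> fin_cases j <;> simp [← hc, e4]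
    linear_combination (-σ (c⁻¹ : Aˣ)) * h5 - g 0 1 * e1 + g 0 0 * (c⁻¹ : Aˣ) * σ (c⁻¹ : Aˣ) * h2
      + g 0 0 * (c⁻¹ : Aˣ) * g 1 1 * e1 - σ (c⁻¹ : Aˣ) * g 0 0 * σ (g 1 1) * e0

/-- The Bruhat relations. -/
structure BRel (σ : A →ₐ[k] A) {K : Type} [Group K] (H : Aˣ → K) (U : A → K) (W : K) : Prop where
  r1 : ∀ t₁ t₂ : Aˣ, H t₁ * H t₂ = H (t₁ * t₂)
  r2 : ∀ b₁ b₂ : A, σ b₁ = b₁ → σ b₂ = b₂ → U b₁ * U b₂ = U (b₁ + b₂)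
  r3 : ∀ (t : Aˣ) (b : A), σ b = b → H t * U b = U ((t : A) * b * σ (t : A)) * H t
  r4 : W ^ 2 = H (-1)
  r5 : ∀ t : Aˣ, W * H t = H ((Units.map (σ : A →* A) t)⁻¹) * W
  r6 : ∀ t : Aˣ, σ (t : A) = (t : A) →
    U (t : A) * W * U (↑t⁻¹ : A) * W * U (t : A) = W * H (-t⁻¹)

/-- pairing relation -/
def PR (σ : A →ₐ[k] A) {K : Type} [Group K] (H : Aˣ → K) (U : A → K) (W : K)
    (g : Matrix (Fin 2) (Fin 2) A) (κ : K) : Prop :=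
  ∃ (x : A) (t : Aˣ) (y : A), σ x = x ∧ σ y = y ∧ g = NM (σ : A →* A) x t y ∧
    κ = U x * H t * W * U y

section Rel
variable {σ : A →ₐ[k] A} {K : Type} [Group K] {H : Aˣ → K} {U : A → K} {W : K}

theorem BRel.H1 (B : BRel σ H U W) : H 1 = 1 := by
  have := B.r1 1 1
  simpa using this

theorem BRel.U0 (B : BRel σ H U W) : U 0 = 1 := by
  have := B.r2 0 0 (map_zero σ) (map_zero σ)
  simpa using this

theorem BRel.Hinv (B : BRel σ H U W) (t : Aˣ) : H t⁻¹ = (H t)⁻¹ := by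
  rw [eq_inv_iff_mul_eq_one, B.r1, inv_mul_cancel, B.H1]

theorem BRel.Uneg (B : BRel σ H U W) (s : A) (hs : σ s = s) : U (-s) = (U s)⁻¹ := by
  rw [eq_inv_iff_mul_eq_one, B.r2 _ _ (by simp [hs]) hs, neg_add_cancel, B.U0]

theorem BRel.W4 (B : BRel σ H U W) : W ^ 4 = 1 := by
  rw [show 4 = 2 * 2 from rfl, pow_mul, B.r4, pow_two, B.r1]
  simp [B.H1]

theorem inv_sym (t : Aˣ) (ht : σ (t : A) = t) : σ ((t⁻¹ : Aˣ) : A) = (t⁻¹ : Aˣ) := by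
  have h1 : Units.map (σ : A →* A) t = t := Units.ext ht
  have h2 : Units.map (σ : A →* A) t⁻¹ = t⁻¹ := by rw [map_inv, h1]
  exact congrArg (fun z : Aˣ => (z : A)) h2

theorem BRel.WUW (B : BRel σ H U W) (t : Aˣ) (ht : σ (t : A) = t) :
    W * U t * W = U (-(t⁻¹ : Aˣ)) * W * H (-t) * U (-(t⁻¹ : Aˣ)) := by
  have h := B.r6 t⁻¹ (inv_sym t ht)
  rw [inv_inv] at h
  rw [B.Uneg _ (inv_sym t ht), mul_assoc _ W, ← h]
  group

theorem PR_unique (hσ : ∀ a, σ (σ a) = a) {g : Matrix (Fin 2) (Fin 2) A} {κ κ' : K}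
    (h : PR σ H U W g κ) (h' : PR σ H U W g κ') : κ = κ' := by
  obtain ⟨x, t, y, _, _, rfl, rfl⟩ := h
  obtain ⟨x', t', y', _, _, hg, rfl⟩ := h'
  obtain ⟨rfl, rfl, rfl⟩ := NM_inj σ hσ hg
  rfl

theorem PR_unit {g : Matrix (Fin 2) (Fin 2) A} {κ : K}
    (h : PR σ H U W g κ) : IsUnit (g 1 0) := by
  obtain ⟨x, t, y, _, _, rfl, rfl⟩ := h
  rw [NM_eq]
  exact (Units.isUnit _).neg

theorem PR_exists (hσ : ∀ a, σ (σ a) = a) {g : Matrix (Fin 2) (Fin 2) A}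
    (hg : g ∈ SLstarSet (⇑σ)) (hc : IsUnit (g 1 0)) : ∃ κ, PR σ H U W g κ := by
  obtain ⟨x, t, y, h1, h2, h3⟩ := NM_exists σ hσ g hg hc
  exact ⟨_, x, t, y, h1, h2, h3, rfl⟩

theorem PR_h (hσ : ∀ a, σ (σ a) = a) (B : BRel σ H U W) {g : Matrix (Fin 2) (Fin 2) A} {κ : K}
    (h : PR σ H U W g κ) (s : Aˣ) : PR σ H U W (hM (σ : A →* A) s * g) (H s * κ) := by
  obtain ⟨x, t, y, hx, hy, rfl, rfl⟩ := h
  refine ⟨s * x * σ s, s * t, y, ?_, hy, ?_, ?_⟩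
  · simp only [map_mul, hσ, hx]; ring
  · have e1 : σ (s : A) * ((Units.map (σ : A →* A) s)⁻¹ : Aˣ) = 1 :=
      Units.mul_inv (Units.map (σ : A →* A) s)
    rw [NM_eq, NM_eq, map_mul, mul_inv, Units.val_mul, Units.val_mul]
    generalize (((Units.map (σ : A →* A) t)⁻¹ : Aˣ) : A) = T
    unfold hM
    generalize (((Units.map (σ : A →* A) s)⁻¹ : Aˣ) : A) = S at *
    ext i j
    fin_cases i <;> fin_cases j <;> simp [Matrix.mul_apply, Fin.sum_univ_two]
    · linear_combination (-((s : A) * x * T)) * e1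
    · linear_combination s * x * T * y * e1
    · ring
  · rw [← B.r1]
    simp only [← mul_assoc]
    rw [B.r3 s x hx]

theorem PR_u (B : BRel σ H U W) {g : Matrix (Fin 2) (Fin 2) A} {κ : K}
    (h : PR σ H U W g κ) (s : A) (hs : σ s = s) : PR σ H U W (uM s * g) (U s * κ) := by
  obtain ⟨x, t, y, hx, hy, rfl, rfl⟩ := h
  refine ⟨s + x, t, y, by simp [hs, hx], hy, ?_, ?_⟩
  · rw [NM_eq, NM_eq]
    unfold uM
    ext i j
    fin_cases i <;> fin_cases j <;> simp [Matrix.mul_apply, Fin.sum_univ_two] <;> ring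
  · rw [← B.r2 s x hs hx]
    simp only [mul_assoc]

theorem PR_w (hσ : ∀ a, σ (σ a) = a) (B : BRel σ H U W) {g : Matrix (Fin 2) (Fin 2) A} {κ : K}
    (h : PR σ H U W g κ) (ha : IsUnit (g 0 0)) : PR σ H U W (wM A * g) (W * κ) := by
  obtain ⟨x, t, y, hx, hy, rfl, rfl⟩ := h
  have hxu : IsUnit x := by
    rw [NM_eq] at ha
    exact isUnit_of_mul_isUnit_left ((IsUnit.neg_iff _).1 ha)
  obtain ⟨X, rfl⟩ := hxu
  have hX1 := inv_sym X hx
  have hXm : Units.map (σ : A →* A) X = X := Units.ext hx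
  have htt : Units.map (σ : A →* A) (Units.map (σ : A →* A) t) = t := Units.ext (hσ t)
  refine ⟨-(X⁻¹ : Aˣ), -(t * X⁻¹), y - (X⁻¹ : Aˣ) * t * σ t, by simp [hX1], ?_, ?_, ?_⟩
  · simp only [map_sub, map_mul, hσ, hX1, hy]; ring
  · have e1 : σ (t : A) * ((Units.map (σ : A →* A) t)⁻¹ : Aˣ) = 1 :=
      Units.mul_inv (Units.map (σ : A →* A) t)
    have e2 : (X : A) * (X⁻¹ : Aˣ) = 1 := Units.mul_inv X
    have e3 : (Units.map (σ : A →* A) (-(t * X⁻¹)))⁻¹ = -((Units.map (σ : A →* A) t)⁻¹ * X) := by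
      have : Units.map (σ : A →* A) (-(t * X⁻¹)) = -(Units.map (σ : A →* A) t * X⁻¹) := by
        apply Units.ext
        simp [hX1]
      rw [this, inv_neg, mul_inv, inv_inv]
    rw [NM_eq, NM_eq, e3]
    simp only [Units.val_neg, Units.val_mul]
    generalize (((Units.map (σ : A →* A) t)⁻¹ : Aˣ) : A) = T at *
    generalize ((X⁻¹ : Aˣ) : A) = Y at *
    unfold wM
    ext i j
    fin_cases i <;> fin_cases j <;> simp [Matrix.mul_apply, Fin.sum_univ_two]
    · linear_combination (-T) * e2
    · linear_combination (T * y - T * σ (t : A) * Y * t) * e2 - Y * t * e1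
    · ring
    · linear_combination T * σ (t : A) * t * e2 + t * e1
  · have f1 : H t * W = W * H ((Units.map (σ : A →* A) t)⁻¹) := by
      rw [B.r5, map_inv, inv_inv, htt]
    have f2 := B.WUW X hx
    have f3 := B.r3 ((Units.map (σ : A →* A) t)⁻¹) (-((X⁻¹ : Aˣ) : A) * t * σ t)
      (by simp only [map_mul, map_neg, hσ, hX1]; ring)
    have f4 : (((Units.map (σ : A →* A) t)⁻¹ : Aˣ) : A) * (-((X⁻¹ : Aˣ) : A) * t * σ t) *
        σ (((Units.map (σ : A →* A) t)⁻¹ : Aˣ) : A) = -((X⁻¹ : Aˣ) : A) := by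
      have e1 : σ (t : A) * ((Units.map (σ : A →* A) t)⁻¹ : Aˣ) = 1 :=
        Units.mul_inv (Units.map (σ : A →* A) t)
      have e2 := congrArg σ e1
      simp only [map_mul, hσ, map_one] at e2
      generalize (((Units.map (σ : A →* A) t)⁻¹ : Aˣ) : A) = T at *
      linear_combination (-(X⁻¹ : Aˣ) * t * σ T) * e1 - (X⁻¹ : Aˣ) * e2
    rw [f4] at f3
    have f5 : W * H (-X * (Units.map (σ : A →* A) t)⁻¹) = H (-(t * X⁻¹)) * W := by
      rw [B.r5]
      congr 2
      rw [map_mul, map_inv, htt]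
      have : Units.map (σ : A →* A) (-X) = -X := by
        apply Units.ext; simp [hx]
      rw [this, mul_inv, inv_neg, inv_inv, neg_mul, mul_comm]
    calc W * (U X * H t * W * U y) = W * U X * (H t * W) * U y := by group
      _ = (W * U X * W) * H ((Units.map (σ : A →* A) t)⁻¹) * U y := by rw [f1]; group
      _ = U (-(X⁻¹ : Aˣ)) * W * H (-X) * (U (-(X⁻¹ : Aˣ)) * H ((Units.map (σ : A →* A) t)⁻¹))
            * U y := by rw [f2]; group
      _ = U (-(X⁻¹ : Aˣ)) * (W * (H (-X) * H ((Units.map (σ : A →* A) t)⁻¹)))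
            * (U (-((X⁻¹ : Aˣ) : A) * t * σ t) * U y) := by rw [← f3]; group
      _ = U (-(X⁻¹ : Aˣ)) * H (-(t * X⁻¹)) * W * U (y - (X⁻¹ : Aˣ) * t * σ t) := by
          rw [B.r1, f5, B.r2 _ _ (by simp only [map_mul, map_neg, hσ, hX1]; ring) hy]
          rw [show -((X⁻¹ : Aˣ) : A) * t * σ t + y = y - (X⁻¹ : Aˣ) * t * σ t by ring]
          group

theorem wuw_mat (b : A) (g : Matrix (Fin 2) (Fin 2) A) :
    wM A * (uM b * (wM A * (wM A * (wM A * g)))) =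
    !![g 0 0, g 0 1; g 1 0 - b * g 0 0, g 1 1 - b * g 0 1] := by
  simp only [wM_mul, uM_mul]
  ext i j
  fin_cases i <;> fin_cases j <;> simp <;> ring

theorem PR_L_unit [IsLocalRing A] (hσ : ∀ a, σ (σ a) = a) (B : BRel σ H U W)
    {g : Matrix (Fin 2) (Fin 2) A} {κ : K}
    (h : PR σ H U W g κ) (ha : ¬ IsUnit (g 0 0)) (b : Aˣ) (hb : σ (b : A) = b) :
    PR σ H U W (wM A * (uM (b : A) * (wM A * (wM A * (wM A * g)))))
      (W * (U b * (W * (W * (W * κ))))) := by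
  have hc := PR_unit h
  have hb1 := inv_sym b hb
  have hbs : σ (-((b⁻¹ : Aˣ) : A)) = -((b⁻¹ : Aˣ) : A) := by simp [hb1]
  have e0 : (b : A) * (b⁻¹ : Aˣ) = 1 := Units.mul_inv b
  have hbm : Units.map (σ : A →* A) (-b) = -b := by
    apply Units.ext; simp [hb]
  have hm1 : Units.map (σ : A →* A) (-1) = -1 := by
    apply Units.ext; simp
  have p1 := PR_h hσ B (PR_u B (PR_h hσ B h (-1)) _ hbs) (-b)
  have e1 : (hM (σ : A →* A) (-b) * (uM (-((b⁻¹ : Aˣ) : A)) * (hM (σ : A →* A) (-1) * g)))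
      = !![b * g 0 0 - g 1 0, b * g 0 1 - g 1 1; (b⁻¹ : Aˣ) * g 1 0, (b⁻¹ : Aˣ) * g 1 1] := by
    simp only [hM_mul, uM_mul]
    rw [hbm, hm1]
    ext i j
    fin_cases i <;> fin_cases j <;> simp [inv_neg]
    · linear_combination (- g 1 0) * e0
    · linear_combination (- g 1 1) * e0
  have hu : IsUnit (b * g 0 0 - g 1 0) := by
    by_contra hn
    have h1 : ¬ IsUnit ((b : A) * g 0 0) := fun h => ha (isUnit_of_mul_isUnit_right h)
    have h2 := IsLocalRing.nonunits_add (a := (b : A) * g 0 0)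
      (b := -((b : A) * g 0 0 - g 1 0)) h1 (fun h => hn ((IsUnit.neg_iff _).1 h))
    apply h2
    convert hc using 1
    ring
  have p2 := PR_u B (PR_w hσ B p1 (by rw [e1]; exact hu)) _ hbs
  convert p2 using 1
  · rw [wuw_mat, e1]
    simp only [uM_mul, wM_mul]
    ext i j
    fin_cases i <;> fin_cases j <;> simp
    · linear_combination (- g 0 0) * e0
    · linear_combination (- g 0 1) * e0
  · have := B.WUW b hb
    rw [← B.r4]
    calc _ = (W * U b * W) * W ^ 2 * κ := by rw [pow_two]; group
      _ = _ := by rw [this]; group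

theorem PR_L [IsLocalRing A] (hσ : ∀ a, σ (σ a) = a) (B : BRel σ H U W)
    {g : Matrix (Fin 2) (Fin 2) A} {κ : K}
    (h : PR σ H U W g κ) (ha : ¬ IsUnit (g 0 0)) (b : A) (hb : σ b = b) :
    PR σ H U W (wM A * (uM b * (wM A * (wM A * (wM A * g)))))
      (W * (U b * (W * (W * (W * κ))))) := by
  by_cases hu : IsUnit b
  · obtain ⟨b, rfl⟩ := hu
    exact PR_L_unit hσ B h ha b hb
  · have hu' : IsUnit (b - 1) := by
      by_contra hn
      have h2 := IsLocalRing.nonunits_add (a := b)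
        (b := -(b - 1)) hu (fun h => hn ((IsUnit.neg_iff _).1 h))
      apply h2
      convert isUnit_one using 1
      ring
    obtain ⟨c, hc⟩ := hu'
    have hcs : σ (c : A) = c := by rw [hc]; simp [hb]
    have p1 := PR_L_unit hσ B h ha c hcs
    have p2 := PR_L_unit hσ B p1 (by rw [wuw_mat]; exact ha) 1 (by simp)
    have hbc : b = 1 + c := by rw [hc]; ring
    convert p2 using 1
    · rw [wuw_mat, wuw_mat, wuw_mat]
      rw [hbc]
      ext i j
      fin_cases i <;> fin_cases j <;> simp <;> ring
    · rw [hbc, ← B.r2 1 c (by simp) hcs]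
      have h4 := B.W4
      calc _ = W * U 1 * 1 * U c * W * W * W * κ := by group
        _ = W * U 1 * W ^ 4 * U c * W * W * W * κ := by rw [h4]
        _ = _ := by
          rw [Units.val_one]
          simp only [pow_succ, pow_zero, one_mul, mul_assoc]

/-- graph of the homomorphism -/
def GR (σ : A →ₐ[k] A) {K : Type} [Group K] (H : Aˣ → K) (U : A → K) (W : K)
    (g : Matrix (Fin 2) (Fin 2) A) (κ : K) : Prop :=
  PR σ H U W g κ ∨ (¬ IsUnit (g 1 0) ∧ PR σ H U W (wM A * g) (W * κ))

theorem GR_unique (hσ : ∀ a, σ (σ a) = a) {g : Matrix (Fin 2) (Fin 2) A} {κ κ' : K}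
    (h : GR σ H U W g κ) (h' : GR σ H U W g κ') : κ = κ' := by
  rcases h with h | ⟨h0, h⟩ <;> rcases h' with h' | ⟨h0', h'⟩
  · exact PR_unique hσ h h'
  · exact absurd (PR_unit h) h0'
  · exact absurd (PR_unit h') h0
  · exact mul_left_cancel (PR_unique hσ h h')

theorem w_mul_00 (g : Matrix (Fin 2) (Fin 2) A) : (wM A * g) 0 0 = g 1 0 := by
  simp [wM, Matrix.mul_apply, Fin.sum_univ_two]

theorem w_mul_10 (g : Matrix (Fin 2) (Fin 2) A) : (wM A * g) 1 0 = - g 0 0 := by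
  simp [wM, Matrix.mul_apply, Fin.sum_univ_two]

theorem w4 (g : Matrix (Fin 2) (Fin 2) A) : wM A * (wM A * (wM A * (wM A * g))) = g := by
  simp only [wM_mul]
  ext i j
  fin_cases i <;> fin_cases j <;> simp

theorem slstar_unit [IsLocalRing A] (hσ : ∀ a, σ (σ a) = a)
    {g : Matrix (Fin 2) (Fin 2) A} (hg : g ∈ SLstarSet (⇑σ))
    (hc : ¬ IsUnit (g 1 0)) : IsUnit (g 0 0) := by
  obtain ⟨h1, h2, h3, h4, h5, h6⟩ := hg
  by_contra ha
  have hc1 : ¬ IsUnit (σ (g 1 0)) := by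
    intro h
    have := h.map σ
    rw [hσ] at this
    exact hc this
  have q4 : ¬ IsUnit (g 0 0 * σ (g 1 1)) := fun h => ha (isUnit_of_mul_isUnit_left h)
  have q6 : ¬ IsUnit (-(g 0 1 * σ (g 1 0))) := fun h =>
    hc1 (isUnit_of_mul_isUnit_right ((IsUnit.neg_iff _).1 h))
  apply IsLocalRing.nonunits_add q4 q6
  rw [← sub_eq_add_neg, h5]
  exact isUnit_one

theorem GR_exists [IsLocalRing A] (hσ : ∀ a, σ (σ a) = a) {g : Matrix (Fin 2) (Fin 2) A}
    (hg : g ∈ SLstarSet (⇑σ)) : ∃ κ, GR σ H U W g κ := by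
  by_cases hc : IsUnit (g 1 0)
  · obtain ⟨κ, h⟩ := PR_exists (H := H) (U := U) (W := W) hσ hg hc
    exact ⟨κ, Or.inl h⟩
  · obtain ⟨κ, h⟩ := PR_exists (H := H) (U := U) (W := W) hσ
      (slstar_mul σ hσ _ (slstar_w σ) g hg)
      (by rw [w_mul_10]; exact (slstar_unit hσ hg hc).neg)
    exact ⟨W⁻¹ * κ, Or.inr ⟨hc, by simpa using h⟩⟩

theorem GR_h (hσ : ∀ a, σ (σ a) = a) (B : BRel σ H U W) {g : Matrix (Fin 2) (Fin 2) A} {κ : K}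
    (h : GR σ H U W g κ) (s : Aˣ) : GR σ H U W (hM (σ : A →* A) s * g) (H s * κ) := by
  rcases h with h | ⟨h0, h⟩
  · exact Or.inl (PR_h hσ B h s)
  · refine Or.inr ⟨?_, ?_⟩
    · intro h1
      apply h0
      have : (hM (σ : A →* A) s * g) 1 0 = (((Units.map (σ : A →* A) s)⁻¹ : Aˣ) : A) * g 1 0 := by
        unfold hM
        simp [Matrix.mul_apply, Fin.sum_univ_two]
      rw [this] at h1
      exact isUnit_of_mul_isUnit_right h1
    · have p := PR_h hσ B h ((Units.map (σ : A →* A) s)⁻¹)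
      have htt : Units.map (σ : A →* A) (Units.map (σ : A →* A) s) = s := Units.ext (hσ s)
      convert p using 1
      · simp only [hM_mul, wM_mul]
        rw [map_inv, htt, inv_inv]
        ext i j
        fin_cases i <;> fin_cases j <;> simp
      · rw [← mul_assoc, B.r5, mul_assoc]

theorem GR_u [IsLocalRing A] (hσ : ∀ a, σ (σ a) = a) (B : BRel σ H U W)
    {g : Matrix (Fin 2) (Fin 2) A} {κ : K}
    (h : GR σ H U W g κ) (s : A) (hs : σ s = s) : GR σ H U W (uM s * g) (U s * κ) := by
  rcases h with h | ⟨h0, h⟩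
  · exact Or.inl (PR_u B h s hs)
  · refine Or.inr ⟨?_, ?_⟩
    · have : (uM s * g) 1 0 = g 1 0 := by
        unfold uM
        simp [Matrix.mul_apply, Fin.sum_univ_two]
      rw [this]; exact h0
    · have p := PR_L hσ B h (by rw [w_mul_00]; exact h0) s hs
      rw [w4] at p
      have h4 : W * (W * (W * (W * κ))) = κ := by
        have := B.W4
        simp only [pow_succ, pow_zero, one_mul] at this
        simp only [← mul_assoc]
        rw [this, one_mul]
      rw [h4] at p
      exact p

theorem GR_w (hσ : ∀ a, σ (σ a) = a) (B : BRel σ H U W)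
    {g : Matrix (Fin 2) (Fin 2) A} {κ : K}
    (h : GR σ H U W g κ) : GR σ H U W (wM A * g) (W * κ) := by
  rcases h with h | ⟨h0, h⟩
  · by_cases ha : IsUnit (g 0 0)
    · exact Or.inl (PR_w hσ B h ha)
    · refine Or.inr ⟨by rw [w_mul_10, IsUnit.neg_iff]; exact ha, ?_⟩
      have p := PR_h hσ B h (-1)
      have hm1 : Units.map (σ : A →* A) (-1) = -1 := by
        apply Units.ext; simp
      convert p using 1
      · simp only [hM_mul, wM_mul]
        rw [hm1]
        ext i j
        fin_cases i <;> fin_cases j <;> simp [inv_neg]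
      · rw [← B.r4, pow_two, mul_assoc]
  · exact Or.inl h

theorem GR_one [IsLocalRing A] (B : BRel σ H U W) : GR σ H U W 1 1 := by
  refine Or.inr ⟨by simp, 0, 1, 0, map_zero σ, map_zero σ, ?_, ?_⟩
  · rw [NM_eq]
    unfold wM
    ext i j
    fin_cases i <;> fin_cases j <;> simp
  · simp [B.U0, B.H1]

end Rel

theorem slstar_closure [IsLocalRing A] (σ : A →ₐ[k] A) (hσ : ∀ a, σ (σ a) = a) :
    SLstarSet (⇑σ) ⊆ Submonoid.closure
      ({g | ∃ s : A, σ s = s ∧ g = uM s} ∪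
       {g | ∃ t : Aˣ, g = hM (σ : A →* A) t} ∪ {wM A}) := by
  set S := Submonoid.closure
      ({g | ∃ s : A, σ s = s ∧ g = uM s} ∪
       {g | ∃ t : Aˣ, g = hM (σ : A →* A) t} ∪ {wM A}) with hS
  have mu : ∀ s : A, σ s = s → uM s ∈ S := fun s hs =>
    Submonoid.subset_closure (Or.inl (Or.inl ⟨s, hs, rfl⟩))
  have mh : ∀ t : Aˣ, hM (σ : A →* A) t ∈ S := fun t =>
    Submonoid.subset_closure (Or.inl (Or.inr ⟨t, rfl⟩))
  have mw : wM A ∈ S := Submonoid.subset_closure (Or.inr rfl)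
  have key : ∀ g ∈ SLstarSet (⇑σ), IsUnit (g 1 0) → g ∈ S := by
    intro g hg hc
    obtain ⟨x, t, y, hx, hy, rfl⟩ := NM_exists σ hσ g hg hc
    exact S.mul_mem (S.mul_mem (S.mul_mem (mu x hx) (mh t)) mw) (mu y hy)
  intro g hg
  by_cases hc : IsUnit (g 1 0)
  · exact key g hg hc
  · have := key _ (slstar_mul σ hσ _ (slstar_w σ) g hg)
      (by rw [w_mul_10]; exact (slstar_unit hσ hg hc).neg)
    rw [← w4 g]
    exact S.mul_mem mw (S.mul_mem mw (S.mul_mem mw this))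

theorem slstar_ind (σ : A →ₐ[k] A) (hσ : ∀ a, σ (σ a) = a) [IsLocalRing A]
    (P : Matrix (Fin 2) (Fin 2) A → Prop)
    (h1 : P 1)
    (hu : ∀ s g, σ s = s → g ∈ SLstarSet (⇑σ) → P g → P (uM s * g))
    (hh : ∀ t g, g ∈ SLstarSet (⇑σ) → P g → P (hM (σ : A →* A) t * g))
    (hw : ∀ g, g ∈ SLstarSet (⇑σ) → P g → P (wM A * g)) :
    ∀ g ∈ SLstarSet (⇑σ), P g := by
  intro g hg
  have one : (1 : Matrix (Fin 2) (Fin 2) A) ∈ SLstarSet (⇑σ) := by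
    refine ⟨?_, ?_, ?_, ?_, ?_, ?_⟩ <;> simp
  have := slstar_closure σ hσ hg
  have h2 : g ∈ SLstarSet (⇑σ) ∧ P g := by
    refine Submonoid.closure_induction_left (motive := fun g _ => g ∈ SLstarSet (⇑σ) ∧ P g)
      ⟨one, h1⟩ ?_ this
    rintro x ((⟨s, hs, rfl⟩ | ⟨t, rfl⟩) | hx) y _ ⟨hy, py⟩
    · exact ⟨slstar_mul σ hσ _ (slstar_u σ s hs) _ hy, hu s y hs hy py⟩
    · exact ⟨slstar_mul σ hσ _ (slstar_h σ hσ t) _ hy, hh t y hy py⟩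
    · rw [Set.mem_singleton_iff] at hx
      subst hx
      exact ⟨slstar_mul σ hσ _ (slstar_w σ) _ hy, hw y hy py⟩
  exact h2.2

theorem slstar_one (σ : A →ₐ[k] A) : (1 : Matrix (Fin 2) (Fin 2) A) ∈ SLstarSet (⇑σ) := by
  refine ⟨?_, ?_, ?_, ?_, ?_, ?_⟩ <;> simp

theorem slstar_univ [IsLocalRing A] (σ : A →ₐ[k] A) (hσ : ∀ a, σ (σ a) = a)
    (K : Type) [Group K] (H : Aˣ → K) (U : A → K) (W₀ : K) (B : BRel σ H U W₀) :
    ∃! φ : ↥(SLstarSet (⇑σ)) → K,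
      (∀ g g' : ↥(SLstarSet (⇑σ)),
        φ ⟨(g : Matrix (Fin 2) (Fin 2) A) * (g' : Matrix (Fin 2) (Fin 2) A),
           slstar_mul σ hσ g g.2 g' g'.2⟩ = φ g * φ g') ∧
      (∀ t : Aˣ, φ ⟨hM (σ : A →* A) t, slstar_h σ hσ t⟩ = H t) ∧
      (∀ (s : A) (hs : σ s = s), φ ⟨uM s, slstar_u σ s hs⟩ = U s) ∧
      φ ⟨wM A, slstar_w σ⟩ = W₀ := by
  have hex : ∀ g : ↥(SLstarSet (⇑σ)), ∃ κ, GR σ H U W₀ g κ := fun g => GR_exists hσ g.2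
  choose φ hφ using hex
  have val : ∀ (g : Matrix (Fin 2) (Fin 2) A) (hg : g ∈ SLstarSet (⇑σ)) (κ : K),
      GR σ H U W₀ g κ → φ ⟨g, hg⟩ = κ := fun g hg κ h => GR_unique hσ (hφ ⟨g, hg⟩) h
  have G1 := GR_one B
  refine ⟨φ, ⟨?_, ?_, ?_, ?_⟩, ?_⟩
  · rintro ⟨g, hg⟩ ⟨g', hg'⟩
    have key := slstar_ind σ hσ (fun g => ∃ κ, GR σ H U W₀ g κ ∧ GR σ H U W₀ (g * g') (κ * φ ⟨g', hg'⟩))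
      ⟨1, G1, by simpa using hφ ⟨g', hg'⟩⟩
      (by
        rintro s g hs _ ⟨κ, h1, h2⟩
        refine ⟨_, GR_u hσ B h1 s hs, ?_⟩
        rw [mul_assoc, mul_assoc]
        exact GR_u hσ B h2 s hs)
      (by
        rintro s g _ ⟨κ, h1, h2⟩
        refine ⟨_, GR_h hσ B h1 s, ?_⟩
        rw [mul_assoc, mul_assoc]
        exact GR_h hσ B h2 s)
      (by
        rintro g _ ⟨κ, h1, h2⟩
        refine ⟨_, GR_w hσ B h1, ?_⟩
        rw [mul_assoc, mul_assoc]
        exact GR_w hσ B h2) g hg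
    obtain ⟨κ, h1, h2⟩ := key
    rw [val g hg κ h1]
    exact val _ _ _ h2
  · intro t
    apply val
    simpa using GR_h hσ B G1 t
  · intro s hs
    apply val
    simpa using GR_u hσ B G1 s hs
  · apply val
    simpa using GR_w hσ B G1
  · rintro ψ ⟨p1, p2, p3, p4⟩
    have key := slstar_ind σ hσ (fun g => ∃ hg : g ∈ SLstarSet (⇑σ), GR σ H U W₀ g (ψ ⟨g, hg⟩))
      (by
        refine ⟨slstar_one σ, ?_⟩
        have h1 := p1 ⟨1, slstar_one σ⟩ ⟨1, slstar_one σ⟩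
        simp only [mul_one, right_eq_mul] at h1
        rw [h1]
        exact G1)
      (by
        rintro s g hs _ ⟨hg, h⟩
        refine ⟨slstar_mul σ hσ _ (slstar_u σ s hs) g hg, ?_⟩
        rw [p1 ⟨_, slstar_u σ s hs⟩ ⟨g, hg⟩, p3 s hs]
        exact GR_u hσ B h s hs)
      (by
        rintro s g _ ⟨hg, h⟩
        refine ⟨slstar_mul σ hσ _ (slstar_h σ hσ s) g hg, ?_⟩
        rw [p1 ⟨_, slstar_h σ hσ s⟩ ⟨g, hg⟩, p2]
        exact GR_h hσ B h s)
      (by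
        rintro g _ ⟨hg, h⟩
        refine ⟨slstar_mul σ hσ _ (slstar_w σ) g hg, ?_⟩
        rw [p1 ⟨_, slstar_w σ⟩ ⟨g, hg⟩, p4]
        exact GR_w hσ B h)
    funext ⟨g, hg⟩
    obtain ⟨_, h⟩ := key g hg
    exact (val g hg _ h).symm

end General

theorem truncPoly_local (k : Type*) [Field k] (m : ℕ) (hm : 0 < m) :
    IsLocalRing (TruncPoly k m) := by
  have hx : (xbar k m) ^ m = 0 := by
    unfold xbar
    rw [← map_pow, Ideal.Quotient.eq_zero_iff_mem]
    exact Ideal.subset_span rfl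
  have hnt : Nontrivial (TruncPoly k m) := by
    refine Ideal.Quotient.nontrivial_iff.2 ?_
    rw [Ne, Ideal.span_singleton_eq_top]
    intro h
    exact Polynomial.not_isUnit_X ((isUnit_pow_iff hm.ne').1 h)
  have key : ∀ p : Polynomial k, p.coeff 0 ≠ 0 →
      IsUnit (Ideal.Quotient.mk (Ideal.span {(Polynomial.X : Polynomial k) ^ m}) p) := by
    intro p hp
    have h1 : p = Polynomial.X * p.divX + Polynomial.C (p.coeff 0) :=
      (Polynomial.X_mul_divX_add p).symm
    rw [h1, map_add]
    apply IsNilpotent.isUnit_add_right_of_commute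
    · refine ⟨m, ?_⟩
      rw [map_mul, mul_pow]
      have := hx
      unfold xbar at this
      rw [this, zero_mul]
    · exact ((isUnit_iff_ne_zero.2 hp).map Polynomial.C).map _
    · exact Commute.all _ _
  refine IsLocalRing.of_isUnit_or_isUnit_one_sub_self ?_
  intro a
  obtain ⟨p, rfl⟩ := Ideal.Quotient.mk_surjective a
  by_cases hp : p.coeff 0 = 0
  · right
    rw [← map_one (Ideal.Quotient.mk _), ← map_sub]
    apply key
    simp [hp]
  · left
    exact key p hp

theorem truncPoly_inv {k : Type*} [Field k] {m : ℕ}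
    (σ : TruncPoly k m →ₐ[k] TruncPoly k m)
    (hσ : σ (xbar k m) = xbar k m ∨ σ (xbar k m) = -xbar k m) (a : TruncPoly k m) :
    σ (σ a) = a := by
  have h : σ (σ (xbar k m)) = xbar k m := by
    rcases hσ with h | h
    · rw [h, h]
    · rw [h, map_neg, h, neg_neg]
  have h2 : (σ.comp σ).comp (Ideal.Quotient.mkₐ k (Ideal.span {(Polynomial.X : Polynomial k) ^ m}))
      = Ideal.Quotient.mkₐ k (Ideal.span {(Polynomial.X : Polynomial k) ^ m}) :=
    Polynomial.algHom_ext h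
  obtain ⟨p, rfl⟩ := Ideal.Quotient.mk_surjective a
  exact DFunLike.congr_fun h2 p

/-- The group `SL_*(2,A_m)` has the Bruhat presentation: it is
generated by `h(t)` (`t ∈ A_m^×`), `u(b)` (`b ∈ A_m^s`) and `w`, and any assignment
of these generators into a group `K` satisfying the Bruhat relations extends to a
unique homomorphism `SL_*(2,A_m) → K`. -/
theorem SLstar_truncPoly_bruhat_presentation
    {k : Type*} [Field k] [Fintype k] (hodd : Odd (Fintype.card k))
    {m : ℕ} (hm : 0 < m)
    (σ : TruncPoly k m →ₐ[k] TruncPoly k m)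
    (hσ : σ (xbar k m) = xbar k m ∨ σ (xbar k m) = -xbar k m) :
    (SLstarSet (⇑σ) ⊆ Submonoid.closure
      ({g | ∃ s : TruncPoly k m, σ s = s ∧ g = uM s} ∪
       {g | ∃ t : (TruncPoly k m)ˣ, g = hM (σ : TruncPoly k m →* TruncPoly k m) t} ∪
       {wM (TruncPoly k m)})) ∧
    ∃ (hmul : ∀ g ∈ SLstarSet (⇑σ), ∀ g' ∈ SLstarSet (⇑σ), g * g' ∈ SLstarSet (⇑σ))
      (hh : ∀ t : (TruncPoly k m)ˣ,
        hM (σ : TruncPoly k m →* TruncPoly k m) t ∈ SLstarSet (⇑σ))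
      (hu : ∀ s : TruncPoly k m, σ s = s → uM s ∈ SLstarSet (⇑σ))
      (hw : wM (TruncPoly k m) ∈ SLstarSet (⇑σ)),
      ∀ (K : Type) [Group K],
        ∀ (H : (TruncPoly k m)ˣ → K) (U : TruncPoly k m → K) (W₀ : K),
        (∀ t₁ t₂ : (TruncPoly k m)ˣ, H t₁ * H t₂ = H (t₁ * t₂)) →
        (∀ b₁ b₂ : TruncPoly k m, σ b₁ = b₁ → σ b₂ = b₂ → U b₁ * U b₂ = U (b₁ + b₂)) →
        (∀ (t : (TruncPoly k m)ˣ) (b : TruncPoly k m), σ b = b →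
          H t * U b = U ((t : TruncPoly k m) * b * σ (t : TruncPoly k m)) * H t) →
        (W₀ ^ 2 = H (-1)) →
        (∀ t : (TruncPoly k m)ˣ,
          W₀ * H t = H ((Units.map (σ : TruncPoly k m →* TruncPoly k m) t)⁻¹) * W₀) →
        (∀ t : (TruncPoly k m)ˣ, σ (t : TruncPoly k m) = (t : TruncPoly k m) →
          U (t : TruncPoly k m) * W₀ * U (↑t⁻¹ : TruncPoly k m) * W₀ *
              U (t : TruncPoly k m) = W₀ * H (-t⁻¹)) →
        ∃! φ : ↥(SLstarSet (⇑σ)) → K,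
          (∀ g g' : ↥(SLstarSet (⇑σ)),
            φ ⟨(g : Matrix (Fin 2) (Fin 2) (TruncPoly k m)) *
                 (g' : Matrix (Fin 2) (Fin 2) (TruncPoly k m)),
               hmul g g.2 g' g'.2⟩ = φ g * φ g') ∧
          (∀ t : (TruncPoly k m)ˣ,
            φ ⟨hM (σ : TruncPoly k m →* TruncPoly k m) t, hh t⟩ = H t) ∧
          (∀ (s : TruncPoly k m) (hs : σ s = s), φ ⟨uM s, hu s hs⟩ = U s) ∧
          φ ⟨wM (TruncPoly k m), hw⟩ = W₀ := by
  haveI := truncPoly_local k m hm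
  have hi := truncPoly_inv σ hσ
  refine ⟨slstar_closure σ hi, slstar_mul σ hi, slstar_h σ hi, slstar_u σ, slstar_w σ, ?_⟩
  intro K _ H U W₀ r1 r2 r3 r4 r5 r6
  exact slstar_univ σ hi K H U W₀ ⟨r1, r2, r3, r4, r5, r6⟩
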